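/- Let B be a finite-dimensional algebra over a field k. If B is twisted periodic, then every finitely generated B-module has complexity at most one. -/

import Mathlib

open TensorProduct

/-- There is an exact sequence `0 → M → P_n → ⋯ → P_1 → N → 0` of `R`-modules
(so with `n` middle terms) in which each middle term `P_i` is projective. -/
def HasProjExactSeq (R : Type) [Ring R] (M N : ModuleCat R) (n : ℕ) : Prop :=
  ∃ (P : ℕ → ModuleCat R) (d : ∀ i, P (i + 1) →ₗ[R] P i)
    (_ : (P 0 : Type) ≃ₗ[R] N) (_ : (M : Type) ≃ₗ[R] P (n + 1)),
    (∀ i, 1 ≤ i → i ≤ n → Module.Projective R (P i)) ∧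
    Function.Surjective (d 0) ∧ Function.Injective (d n) ∧
    ∀ i < n, LinearMap.range (d (i + 1)) = LinearMap.ker (d i)

/-- The regular bimodule `B` as a module over the enveloping algebra `B ⊗[k] Bᵐᵒᵖ`. -/
noncomputable def regularBimodule (k B : Type) [Field k] [Ring B] [Algebra k B] :
    ModuleCat (B ⊗[k] Bᵐᵒᵖ) :=
  letI : Module (B ⊗[k] Bᵐᵒᵖ) B := TensorProduct.Algebra.module
  ModuleCat.of _ B

/-- The twisted bimodule `₁B_φ` (underlying set `B`, right action twisted by `φ`,
i.e. `a • x • b = a * x * φ b`) as a module over the enveloping algebra `B ⊗[k] Bᵐᵒᵖ`. -/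
noncomputable def twistedBimodule (k B : Type) [Field k] [Ring B] [Algebra k B]
    (φ : B ≃ₐ[k] B) : ModuleCat (B ⊗[k] Bᵐᵒᵖ) :=
  letI : Module (B ⊗[k] Bᵐᵒᵖ) B := TensorProduct.Algebra.module
  letI : Module (B ⊗[k] Bᵐᵒᵖ) B :=
    Module.compHom B
      (Algebra.TensorProduct.map (AlgHom.id k B) (AlgEquiv.op φ).toAlgHom).toRingHom
  ModuleCat.of _ B

/-- A finite-dimensional `k`-algebra `B` is twisted periodic if there are `n ≥ 1`, an algebra
automorphism `φ` of `B`, and an exact sequence `0 → ₁B_φ → P_{n-1} → ⋯ → P_0 → B → 0` of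
bimodules with all `P_i` projective over `B ⊗[k] Bᵐᵒᵖ`. -/
noncomputable def IsTwistedPeriodicAlgebra (k B : Type) [Field k] [Ring B] [Algebra k B] : Prop :=
  ∃ (n : ℕ) (φ : B ≃ₐ[k] B), 1 ≤ n ∧
    HasProjExactSeq (B ⊗[k] Bᵐᵒᵖ) (twistedBimodule k B φ) (regularBimodule k B) n

/-- The dimension over `k` of a module over the `k`-algebra `B`. -/
noncomputable def kDim (k B : Type) [Field k] [Ring B] [Algebra k B]
    (M : Type) [AddCommGroup M] [Module B M] : ℕ :=
  letI : Module k M := Module.compHom M (algebraMap k B)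
  Module.finrank k M

/-- A `B`-module `M` has complexity at most one: there are a constant `C` and a projective
resolution `⋯ → P_1 → P_0 → M → 0` by finitely generated projective `B`-modules with
`dim_k P_t ≤ C` for all `t`. -/
noncomputable def ComplexityLeOne (k B : Type) [Field k] [Ring B] [Algebra k B]
    (M : Type) [AddCommGroup M] [Module B M] : Prop :=
  ∃ (C : ℕ) (P : ℕ → ModuleCat B) (f : ∀ i, P (i + 1) →ₗ[B] P i) (π : (P 0 : Type) →ₗ[B] M),
    (∀ i, Module.Projective B (P i)) ∧ (∀ i, Module.Finite B (P i)) ∧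
    (∀ i, kDim k B (P i) ≤ C) ∧
    Function.Surjective π ∧ LinearMap.range (f 0) = LinearMap.ker π ∧
    ∀ i, LinearMap.range (f (i + 1)) = LinearMap.ker (f i)

set_option linter.style.haveILetI false

namespace TwPer

section Res

variable (k B : Type) [Field k] [Ring B] [Algebra k B]

theorem kDim_eq (M : Type) [AddCommGroup M] [Module B M] [i : Module k M] [IsScalarTower k B M] :
    kDim k B M = Module.finrank k M := by
  unfold kDim
  have : i = Module.compHom M (algebraMap k B) := by
    refine Module.ext' _ _ ?_
    intro r m
    rw [← algebraMap_smul B r m]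
    rfl
  subst this
  rfl

theorem kfin [FiniteDimensional k B] (M : Type) [AddCommGroup M] [Module B M] [Module k M]
    [IsScalarTower k B M] [Module.Finite B M] : Module.Finite k M := Module.Finite.trans B M

theorem tower (M : Type) [AddCommGroup M] [Module B M] :
    letI : Module k M := Module.compHom M (algebraMap k B)
    IsScalarTower k B M := by
  letI : Module k M := Module.compHom M (algebraMap k B)
  exact IsScalarTower.of_algebraMap_smul fun r x => rfl

theorem kDim_le_of_surj [FiniteDimensional k B] {M N : Type} [AddCommGroup M] [Module B M]
    [AddCommGroup N] [Module B N] [Module.Finite B M] (f : M →ₗ[B] N)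
    (hf : Function.Surjective f) : kDim k B N ≤ kDim k B M := by
  letI : Module k M := Module.compHom M (algebraMap k B)
  letI : Module k N := Module.compHom N (algebraMap k B)
  haveI := tower k B M
  haveI := tower k B N
  haveI := kfin k B M
  rw [kDim_eq k B M, kDim_eq k B N]
  exact LinearMap.finrank_le_finrank_of_surjective (f := f.restrictScalars k) hf

theorem kDim_ker [FiniteDimensional k B] {M N : Type} [AddCommGroup M] [Module B M]
    [AddCommGroup N] [Module B N] [Module.Finite B M] (f : M →ₗ[B] N)
    (hf : Function.Surjective f) : kDim k B M = kDim k B N + kDim k B (LinearMap.ker f) := by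
  letI : Module k M := Module.compHom M (algebraMap k B)
  letI : Module k N := Module.compHom N (algebraMap k B)
  haveI := tower k B M
  haveI := tower k B N
  haveI := kfin k B M
  rw [kDim_eq k B M, kDim_eq k B N, kDim_eq k B (LinearMap.ker f)]
  have := LinearMap.finrank_range_add_finrank_ker (f.restrictScalars k)
  rw [LinearMap.range_eq_top.2 (by exact hf), finrank_top] at this
  exact this.symm

theorem noeth [FiniteDimensional k B] : IsNoetherianRing B :=
  isNoetherian_of_isNoetherianRing_of_finite k B |> fun _ => isNoetherian_of_tower k inferInstance

/-- `M` has an `n`-th syzygy (by arbitrary projectives) that is f.g. of dimension at most `d`. -/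
def S (d : ℕ) : ℕ → ∀ (M : Type) [AddCommGroup M] [Module B M], Prop
  | 0, M, _, _ => Module.Finite B M ∧ kDim k B M ≤ d
  | n + 1, M, _, _ => ∃ (P : ModuleCat.{0} B) (π : P →ₗ[B] M), Module.Projective B P ∧
      Function.Surjective π ∧ S d n (LinearMap.ker π)

/-- The same with f.g. projectives of dimension at most `C`. -/
def SF (C d : ℕ) : ℕ → ∀ (M : Type) [AddCommGroup M] [Module B M], Prop
  | 0, M, _, _ => Module.Finite B M ∧ kDim k B M ≤ d
  | n + 1, M, _, _ => ∃ (P : ModuleCat.{0} B) (π : P →ₗ[B] M), Module.Projective B P ∧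
      Module.Finite B P ∧ kDim k B P ≤ C ∧
      Function.Surjective π ∧ SF C d n (LinearMap.ker π)

variable {k B}

theorem S_congr [FiniteDimensional k B] (d n : ℕ) (M N : Type) [AddCommGroup M] [Module B M]
    [AddCommGroup N] [Module B N] (e : M ≃ₗ[B] N) (h : S k B d n M) : S k B d n N := by
  induction n generalizing M N with
  | zero =>
    obtain ⟨h1, h2⟩ := h
    exact ⟨Module.Finite.equiv e, (kDim_le_of_surj k B e.toLinearMap e.surjective).trans h2⟩
  | succ n ih =>
    obtain ⟨P, π, hP, hs, hk⟩ := h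
    refine ⟨P, e.toLinearMap ∘ₗ π, hP, e.surjective.comp hs, ih _ _ ?_ hk⟩
    exact LinearEquiv.ofEq _ _ (by ext x; simp)

theorem S_mono {d d' : ℕ} (hd : d ≤ d') (n : ℕ) (M : Type) [AddCommGroup M] [Module B M]
    (h : S k B d n M) : S k B d' n M := by
  induction n generalizing M with
  | zero => exact ⟨h.1, h.2.trans hd⟩
  | succ n ih =>
    obtain ⟨P, π, hP, hs, hk⟩ := h
    exact ⟨P, π, hP, hs, ih _ hk⟩

theorem SF_mono {C C' : ℕ} (hC : C ≤ C') (d n : ℕ) (M : Type) [AddCommGroup M] [Module B M]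
    (h : SF k B C d n M) : SF k B C' d n M := by
  induction n generalizing M with
  | zero => exact h
  | succ n ih =>
    obtain ⟨P, π, hP, hf, hc, hs, hk⟩ := h
    exact ⟨P, π, hP, hf, hc.trans hC, hs, ih _ hk⟩

theorem proj_ker {P Q : Type} [AddCommGroup P] [Module B P] [AddCommGroup Q] [Module B Q]
    [Module.Projective B P] [Module.Projective B Q] (f : P →ₗ[B] Q)
    (hf : Function.Surjective f) : Module.Projective B (LinearMap.ker f) := by
  obtain ⟨s, hs⟩ := Module.projective_lifting_property f LinearMap.id hf
  have hs' : ∀ x, f (s x) = x := fun x => LinearMap.congr_fun hs x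
  refine Module.Projective.of_split (LinearMap.ker f).subtype
    (LinearMap.codRestrict _ (LinearMap.id - s ∘ₗ f) (fun x => by simp [hs'])) ?_
  ext x
  have : f x = 0 := x.2
  simp [this]

/-- Replace the first projective by another one. -/
theorem swap [FiniteDimensional k B] (d n : ℕ) {M P F : Type} [AddCommGroup M] [Module B M]
    [AddCommGroup P] [Module B P] [AddCommGroup F] [Module B F]
    [Module.Projective B P] [Module.Projective B F] (π : P →ₗ[B] M) (ρ : F →ₗ[B] M)
    (hπ : Function.Surjective π) (hρ : Function.Surjective ρ)
    (h : S k B d (n + 1) (LinearMap.ker π)) : S k B d (n + 1) (LinearMap.ker ρ) := by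
  obtain ⟨Q, δ, hQ, hδ, hk⟩ := h
  obtain ⟨s, hs⟩ := Module.projective_lifting_property π ρ hπ
  have hs' : ∀ x, π (s x) = ρ x := fun x => LinearMap.congr_fun hs x
  let g : (Q × F) →ₗ[B] P := LinearMap.coprod ((LinearMap.ker π).subtype ∘ₗ δ) s
  have hgd : ∀ x f, g (x, f) = δ x + s f := fun x f => by simp [g]
  have hπδ : ∀ x, π (δ x) = 0 := fun x => (δ x).2
  have hg : Function.Surjective g := by
    intro p
    obtain ⟨f, hf⟩ := hρ (π p)
    obtain ⟨x, hx⟩ := hδ ⟨p - s f, by simp [hs', hf]⟩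
    exact ⟨(x, f), by rw [hgd, hx]; simp⟩
  haveI : Module.Projective B (LinearMap.ker g) := proj_ker g hg
  have hkm : ∀ y : LinearMap.ker g, ρ y.1.2 = 0 := by
    rintro ⟨⟨x, f⟩, hy⟩
    have h1 : (δ x : P) + s f = 0 := by rw [← hgd]; exact hy
    have h2 := congrArg π h1
    simpa [hs', hπδ] using h2
  let τ : LinearMap.ker g →ₗ[B] LinearMap.ker ρ :=
    LinearMap.codRestrict _ (LinearMap.snd B Q F ∘ₗ (LinearMap.ker g).subtype) hkm
  have hτ : ∀ y, ((τ y : LinearMap.ker ρ) : F) = y.1.2 := fun y => rfl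
  refine ⟨ModuleCat.of B (LinearMap.ker g), τ, inferInstance, ?_, ?_⟩
  · rintro ⟨f, hf⟩
    have hf' : ρ f = 0 := hf
    obtain ⟨x, hx⟩ := hδ ⟨- s f, by simp [hs', hf']⟩
    refine ⟨⟨(x, f), ?_⟩, ?_⟩
    · show g (x, f) = 0
      rw [hgd, hx]; simp
    · exact Subtype.ext rfl
  · have hker : ∀ y : LinearMap.ker δ, g ((y : Q), 0) = 0 := by
      intro y
      have : δ y = 0 := y.2
      rw [hgd, this]; simp
    let a : LinearMap.ker δ →ₗ[B] LinearMap.ker g :=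
      LinearMap.codRestrict _ (LinearMap.inl B Q F ∘ₗ (LinearMap.ker δ).subtype) hker
    let b : LinearMap.ker δ →ₗ[B] LinearMap.ker τ :=
      LinearMap.codRestrict _ a (fun y => Subtype.ext rfl)
    refine S_congr d n _ _ (LinearEquiv.ofBijective b ⟨?_, ?_⟩) hk
    · intro y z hyz
      have : (((b y : LinearMap.ker g) : Q × F)).1 = (((b z : LinearMap.ker g) : Q × F)).1 := by
        rw [hyz]
      exact Subtype.ext this
    · rintro ⟨⟨⟨x, f⟩, hy⟩, hz⟩
      have hf : f = 0 := congrArg Subtype.val (show τ ⟨(x, f), hy⟩ = 0 from hz)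
      subst hf
      have h1 : (δ x : P) + s 0 = 0 := by rw [← hgd]; exact hy
      refine ⟨⟨x, ?_⟩, ?_⟩
      · exact Subtype.ext (by simpa using h1)
      · rfl

theorem exists_free [FiniteDimensional k B] (e : ℕ) (M : Type) [AddCommGroup M] [Module B M]
    [Module.Finite B M] (he : kDim k B M ≤ e) :
    ∃ ρ : (Fin e → B) →ₗ[B] M, Function.Surjective ρ := by
  letI : Module k M := Module.compHom M (algebraMap k B)
  haveI := tower k B M
  haveI := kfin k B M
  rw [kDim_eq k B M] at he
  let b := Module.finBasis k M
  let v : Fin e → M := fun i => if h : i.1 < Module.finrank k M then b ⟨i, h⟩ else 0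
  refine ⟨Fintype.linearCombination B v, ?_⟩
  rw [← LinearMap.range_eq_top, Fintype.range_linearCombination, eq_top_iff]
  intro m _
  rw [← b.sum_repr m]
  refine Submodule.sum_mem _ fun i _ => ?_
  rw [← algebraMap_smul B]
  refine Submodule.smul_mem _ _ (Submodule.subset_span ⟨⟨i, i.2.trans_le he⟩, ?_⟩)
  simp [v]

theorem finitize [FiniteDimensional k B] (d n : ℕ) : ∀ e : ℕ, ∃ C : ℕ, ∀ (M : Type)
    [AddCommGroup M] [Module B M] [Module.Finite B M], kDim k B M ≤ e →
    S k B d (n + 1) M → SF k B C d (n + 1) M := by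
  haveI := noeth k B
  induction n with
  | zero =>
    intro e
    refine ⟨e + d, fun M _ _ _ he h => ?_⟩
    obtain ⟨P, π, hP, hs, hf, hk⟩ := h
    haveI : Module.Finite B P := by
      haveI : Module.Finite B (LinearMap.range (LinearMap.ker π).subtype) := by
        rw [Submodule.range_subtype]; exact hf
      have h1 : (LinearMap.ker π).FG := Module.Finite.iff_fg.1 hf
      refine ⟨Submodule.fg_of_fg_map_of_fg_inf_ker π ?_ ?_⟩
      · rw [Submodule.map_top, LinearMap.range_eq_top.2 hs]; exact Module.Finite.fg_top
      · rw [top_inf_eq]; exact h1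
    refine ⟨P, π, hP, inferInstance, ?_, hs, hf, hk⟩
    rw [kDim_ker k B π hs]
    exact add_le_add he hk
  | succ n ih =>
    intro e
    obtain ⟨C, hC⟩ := ih (kDim k B (Fin e → B))
    refine ⟨max C (kDim k B (Fin e → B)), fun M _ _ _ he h => ?_⟩
    obtain ⟨P, π, hP, hs, hk⟩ := h
    obtain ⟨ρ, hρ⟩ := exists_free (k := k) e M he
    refine ⟨ModuleCat.of B (Fin e → B), ρ, ?_, ?_, le_max_right _ _, hρ, ?_⟩
    · exact inferInstanceAs (Module.Projective B (Fin e → B))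
    · exact inferInstanceAs (Module.Finite B (Fin e → B))
    · refine SF_mono (le_max_left _ _) _ _ _ (hC _ ?_ (swap d n π ρ hs hρ hk))
      have := kDim_ker k B ρ hρ
      exact (Nat.le_add_left _ _).trans this.ge

theorem build [FiniteDimensional k B] (C d m : ℕ)
    (H : ∀ (M : Type) [AddCommGroup M] [Module B M] [Module.Finite B M], kDim k B M ≤ d →
      SF k B C d (m + 1) M) (M : Type) [AddCommGroup M] [Module B M] [Module.Finite B M]
    (hM : kDim k B M ≤ d) : ComplexityLeOne k B M := by
  let Good : ModuleCat.{0} B → Prop := fun N => ∃ j, SF k B C d j N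
  have step : ∀ N : {N : ModuleCat.{0} B // Good N}, ∃ (P : ModuleCat.{0} B) (π : P →ₗ[B] N.1),
      Module.Projective B P ∧ Module.Finite B P ∧ kDim k B P ≤ C ∧
      Function.Surjective π ∧ Good (ModuleCat.of B (LinearMap.ker π)) := by
    rintro ⟨N, j, hj⟩
    have key : ∀ j, SF k B C d (j + 1) N → ∃ (P : ModuleCat.{0} B) (π : P →ₗ[B] N),
      Module.Projective B P ∧ Module.Finite B P ∧ kDim k B P ≤ C ∧
      Function.Surjective π ∧ Good (ModuleCat.of B (LinearMap.ker π)) := by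
      rintro j ⟨P, π, h1, h2, h3, h4, h5⟩
      exact ⟨P, π, h1, h2, h3, h4, j, h5⟩
    cases j with
    | zero =>
      obtain ⟨h1, h2⟩ := hj
      exact key m (H N h2)
    | succ j => exact key j hj
  choose P π h1 h2 h3 h4 h5 using step
  let st : ℕ → {N : ModuleCat.{0} B // Good N} := fun t =>
    Nat.rec ⟨ModuleCat.of B M, 0, ‹_›, hM⟩ (fun _ N => ⟨ModuleCat.of B (LinearMap.ker (π N)), h5 N⟩) t
  let f : ∀ i, P (st (i + 1)) →ₗ[B] P (st i) := fun i =>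
    (LinearMap.ker (π (st i))).subtype ∘ₗ (π (st (i + 1)))
  have hr : ∀ i, LinearMap.range (f i) = LinearMap.ker (π (st i)) := by
    intro i
    have : LinearMap.range (f i) = (LinearMap.range (π (st (i+1)))).map
      (LinearMap.ker (π (st i))).subtype := LinearMap.range_comp _ _
    rw [this, LinearMap.range_eq_top.2 (h4 _)]
    exact Submodule.map_subtype_top _
  have hk : ∀ i, LinearMap.ker (f i) = LinearMap.ker (π (st (i + 1))) := by
    intro i
    exact LinearMap.ker_comp_of_ker_eq_bot _ (Submodule.ker_subtype _)
  exact ⟨C, fun i => P (st i), f, π (st 0), fun i => h1 _, fun i => h2 _, fun i => h3 _, h4 (st 0),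
    hr 0, fun i => (hr (i + 1)).trans (hk i).symm⟩

theorem S_of_seq [FiniteDimensional k B] (d n : ℕ) (Q : ℕ → Type) [∀ i, AddCommGroup (Q i)]
    [∀ i, Module B (Q i)] (D : ∀ i, Q (i + 1) →ₗ[B] Q i)
    (hQ : ∀ i, 1 ≤ i → i ≤ n → Module.Projective B (Q i))
    (h0 : Function.Surjective (D 0)) (hfin : Module.Finite B (Q (n + 1)))
    (hd : kDim k B (Q (n + 1)) ≤ d)
    (hex : ∀ i < n, LinearMap.range (D (i + 1)) = LinearMap.ker (D i)) : S k B d n (Q 0) := by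
  have key : ∀ j i, i + j = n → S k B d j (LinearMap.range (D i)) := by
    intro j
    induction j with
    | zero =>
      rintro i rfl
      exact ⟨inferInstance, (kDim_le_of_surj k B _ (LinearMap.surjective_rangeRestrict (D _))).trans hd⟩
    | succ j ih =>
      intro i hi
      refine ⟨ModuleCat.of B (Q (i + 1)), (D i).rangeRestrict, hQ _ (by omega) (by omega),
        LinearMap.surjective_rangeRestrict _, ?_⟩
      refine S_congr d j _ _ (LinearEquiv.ofEq _ _ ?_) (ih (i + 1) (by omega))
      rw [hex i (by omega), LinearMap.ker_rangeRestrict]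
  exact S_congr d n _ _ (LinearEquiv.ofTop _ (LinearMap.range_eq_top.2 h0)) (key n 0 (by omega))

end Res

section Tens

set_option linter.unusedSectionVars false

open MulOpposite

variable (k B : Type) [Field k] [Ring B] [Algebra k B]
variable (M : Type) [AddCommGroup M] [Module k M] [Module B M] [IsScalarTower k B M]
variable (X : Type) [AddCommGroup X] [Module k X] [Module B X] [Module Bᵐᵒᵖ X]
  [IsScalarTower k B X] [IsScalarTower k Bᵐᵒᵖ X] [SMulCommClass B Bᵐᵒᵖ X]
variable (Y : Type) [AddCommGroup Y] [Module k Y] [Module B Y] [Module Bᵐᵒᵖ Y]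
  [IsScalarTower k B Y] [IsScalarTower k Bᵐᵒᵖ Y] [SMulCommClass B Bᵐᵒᵖ Y]

/-- The relations defining `X ⊗_B M` as a quotient of `X ⊗_k M`. -/
def rel : Submodule B (X ⊗[k] M) :=
  Submodule.span B {t | ∃ (x : X) (b : B) (m : M), t = (op b • x) ⊗ₜ[k] m - x ⊗ₜ[k] (b • m)}

/-- `X ⊗_B M`. -/
abbrev T : Type := (X ⊗[k] M) ⧸ rel k B M X

variable {k B M X Y}

theorem rel_mem (x : X) (b : B) (m : M) :
    (op b • x) ⊗ₜ[k] m - x ⊗ₜ[k] (b • m) ∈ rel k B M X :=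
  Submodule.subset_span ⟨x, b, m, rfl⟩

theorem rel_map (f : X →ₗ[k] Y) (hf : ∀ (b : B) x, f (op b • x) = op b • f x) (t : X ⊗[k] M)
    (ht : t ∈ rel k B M X) : f.rTensor M t ∈ rel k B M Y := by
  have key : ∀ b : B, f.rTensor M (b • t) ∈ rel k B M Y := by
    induction ht using Submodule.span_induction with
    | mem t h =>
      obtain ⟨x, c, m, rfl⟩ := h
      intro b
      rw [smul_sub, TensorProduct.smul_tmul', TensorProduct.smul_tmul', smul_comm, map_sub,
        LinearMap.rTensor_tmul, LinearMap.rTensor_tmul, hf]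
      exact rel_mem _ _ _
    | zero => intro b; simp
    | add x y _ _ hx hy => intro b; rw [smul_add, map_add]; exact add_mem (hx b) (hy b)
    | smul a x _ hx => intro b; rw [smul_smul]; exact hx _
  simpa using key 1

/-- The map induced by a bimodule map. -/
noncomputable def Tmap (f : X →ₗ[B] Y) (hf : ∀ (b : B) x, f (op b • x) = op b • f x) :
    T k B M X →ₗ[B] T k B M Y :=
  Submodule.mapQ _ _ (TensorProduct.AlgebraTensorModule.rTensor k M f) (fun t ht =>
    rel_map (f.restrictScalars k) hf t ht)

theorem Tmap_mk (f : X →ₗ[B] Y) (hf : ∀ (b : B) x, f (op b • x) = op b • f x) (t : X ⊗[k] M) :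
    Tmap (k := k) (M := M) f hf (Submodule.Quotient.mk t) =
      Submodule.Quotient.mk ((f.restrictScalars k).rTensor M t) := rfl

theorem T_lift [Module (B ⊗[k] Bᵐᵒᵖ) X] [Module.Projective (B ⊗[k] Bᵐᵒᵖ) X]
    (h : ∀ (a : B) (b : Bᵐᵒᵖ) (x : X), (a ⊗ₜ[k] b) • x = a • b • x)
    (N : Type) [AddCommGroup N] [Module k N] [Module B N] [IsScalarTower k B N]
    (g : N →ₗ[B] T k B M X) (hg : Function.Surjective g) :
    ∃ f : T k B M X →ₗ[B] N, g.comp f = .id := by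
  let i1 : Module Bᵐᵒᵖ (M →ₗ[k] N) := inferInstanceAs (Module Bᵈᵐᵃ (M →ₗ[k] N))
  let i2 : Module Bᵐᵒᵖ (M →ₗ[k] T k B M X) := inferInstanceAs (Module Bᵈᵐᵃ (M →ₗ[k] T k B M X))
  have e1 : ∀ (b : B) (f : M →ₗ[k] N) (m : M), (op b • f) m = f (b • m) := fun b f m => rfl
  have e2 : ∀ (b : B) (f : M →ₗ[k] T k B M X) (m : M), (op b • f) m = f (b • m) :=
    fun b f m => rfl
  haveI : IsScalarTower k Bᵐᵒᵖ (M →ₗ[k] N) := ⟨fun c b f => by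
    ext1 m
    obtain ⟨b, rfl⟩ := op_surjective b
    rw [← op_smul, e1, smul_assoc, LinearMap.map_smul, LinearMap.smul_apply, e1]⟩
  haveI : IsScalarTower k Bᵐᵒᵖ (M →ₗ[k] T k B M X) := ⟨fun c b f => by
    ext1 m
    obtain ⟨b, rfl⟩ := op_surjective b
    rw [← op_smul, e2, smul_assoc, LinearMap.map_smul, LinearMap.smul_apply, e2]⟩
  haveI : SMulCommClass B Bᵐᵒᵖ (M →ₗ[k] N) := ⟨fun c b f => rfl⟩
  haveI : SMulCommClass B Bᵐᵒᵖ (M →ₗ[k] T k B M X) := ⟨fun c b f => rfl⟩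
  letI j1 : Module (B ⊗[k] Bᵐᵒᵖ) (M →ₗ[k] N) := TensorProduct.Algebra.module
  letI j2 : Module (B ⊗[k] Bᵐᵒᵖ) (M →ₗ[k] T k B M X) := TensorProduct.Algebra.module
  have s1 : ∀ (a : B) (b : Bᵐᵒᵖ) (f : M →ₗ[k] N), (a ⊗ₜ[k] b) • f = a • b • f :=
    fun a b f => TensorProduct.Algebra.smul_def a b f
  have s2 : ∀ (a : B) (b : Bᵐᵒᵖ) (f : M →ₗ[k] T k B M X), (a ⊗ₜ[k] b) • f = a • b • f :=
    fun a b f => TensorProduct.Algebra.smul_def a b f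
  have z2 : ∀ f : M →ₗ[k] T k B M X, (0 : B ⊗[k] Bᵐᵒᵖ) • f = 0 :=
    fun f => zero_smul (B ⊗[k] Bᵐᵒᵖ) f
  let G : (M →ₗ[k] N) →ₗ[B ⊗[k] Bᵐᵒᵖ] (M →ₗ[k] T k B M X) :=
    { toFun := fun f => g.restrictScalars k ∘ₗ f
      map_add' := fun f f' => LinearMap.comp_add _ _ _
      map_smul' := fun r f => by
        induction r with
        | zero =>
          exact (congrArg (fun f' : M →ₗ[k] N => g.restrictScalars k ∘ₗ f')
            (zero_smul (B ⊗[k] Bᵐᵒᵖ) f)).trans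
            ((LinearMap.comp_zero _).trans (z2 _).symm)
        | add r s hr hs => rw [add_smul, LinearMap.comp_add, hr, hs, RingHom.id_apply,
            RingHom.id_apply, RingHom.id_apply, add_smul]
        | tmul a b =>
          obtain ⟨b, rfl⟩ := op_surjective b
          ext1 m
          rw [RingHom.id_apply, s1, s2]
          simp only [LinearMap.comp_apply, LinearMap.smul_apply, e1, e2,
            LinearMap.restrictScalars_apply, map_smul] }
  have hG : Function.Surjective G := by
    intro f
    obtain ⟨f', hf'⟩ := Module.projective_lifting_property (g.restrictScalars k) f hg
    exact ⟨f', hf'⟩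
  let U : X →ₗ[B ⊗[k] Bᵐᵒᵖ] (M →ₗ[k] T k B M X) :=
    { toFun := fun x => ((rel k B M X).mkQ.restrictScalars k) ∘ₗ TensorProduct.mk k X M x
      map_add' := fun x y => by rw [map_add, LinearMap.comp_add]
      map_smul' := fun r x => by
        induction r with
        | zero =>
          exact (congrArg (fun x' : X => ((rel k B M X).mkQ.restrictScalars k) ∘ₗ
            TensorProduct.mk k X M x') (zero_smul (B ⊗[k] Bᵐᵒᵖ) x)).trans
            (Eq.trans (by rw [map_zero, LinearMap.comp_zero])
              (z2 _).symm)
        | add r s hr hs => rw [add_smul, map_add, LinearMap.comp_add, hr, hs, RingHom.id_apply,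
            RingHom.id_apply, RingHom.id_apply, add_smul]
        | tmul a b =>
          obtain ⟨b, rfl⟩ := op_surjective b
          ext1 m
          rw [RingHom.id_apply, s2, h]
          simp only [LinearMap.comp_apply, LinearMap.smul_apply, e2,
            LinearMap.restrictScalars_apply, TensorProduct.mk_apply]
          rw [← map_smul, TensorProduct.smul_tmul', smul_comm]
          rw [← sub_eq_zero, ← map_sub, Submodule.mkQ_apply, Submodule.Quotient.mk_eq_zero]
          exact rel_mem _ _ _ }
  obtain ⟨V, hV⟩ := Module.projective_lifting_property G U hG
  have hV' : ∀ x m, g (V x m) = Submodule.Quotient.mk (x ⊗ₜ[k] m) := fun x m =>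
    LinearMap.congr_fun (LinearMap.congr_fun hV x) m
  have one1 : (1 : Bᵐᵒᵖ) = op 1 := rfl
  have VB : ∀ (a : B) (x : X), V (a • x) = a • V x := fun a x => by
    have := V.map_smul (a ⊗ₜ[k] 1) x
    rwa [h, s1, one_smul, one_smul] at this
  have VO : ∀ (b : Bᵐᵒᵖ) (x : X), V (b • x) = b • V x := fun b x => by
    have := V.map_smul (1 ⊗ₜ[k] b) x
    rwa [h, s1, one_smul, one_smul] at this
  let V' : X →ₗ[B] (M →ₗ[k] N) := { toFun := V, map_add' := V.map_add, map_smul' := VB }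
  refine ⟨Submodule.liftQ _ (TensorProduct.AlgebraTensorModule.lift V') ?_, ?_⟩
  · refine Submodule.span_le.2 ?_
    rintro _ ⟨x, b, m, rfl⟩
    show _ = _
    rw [map_sub, TensorProduct.AlgebraTensorModule.lift_tmul,
      TensorProduct.AlgebraTensorModule.lift_tmul, sub_eq_zero]
    show V (op b • x) m = V x (b • m)
    rw [VO, e1]
  · refine Submodule.linearMap_qext _ ?_
    refine TensorProduct.AlgebraTensorModule.ext fun x m => ?_
    exact hV' x m

/-- `X ⊗_B M` is projective if `X` is projective as a bimodule. -/
theorem T_projective [Module (B ⊗[k] Bᵐᵒᵖ) X] [Module.Projective (B ⊗[k] Bᵐᵒᵖ) X]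
    (h : ∀ (a : B) (b : Bᵐᵒᵖ) (x : X), (a ⊗ₜ[k] b) • x = a • b • x) :
    Module.Projective B (T k B M X) :=
  Module.Projective.of_lifting_property'' fun g hg => T_lift h _ g hg

theorem restr {A R Z F : Type} [Ring A] [Ring R] [AddCommGroup Z] [Module R Z] [Module A Z]
    [AddCommGroup F] [Module A F] [Module.Projective A F] [Module.Projective R Z]
    (ι : A →+* R) (h : ∀ (a : A) (z : Z), ι a • z = a • z)
    (e : F ≃+ R) (he : ∀ (a : A) (f : F), e (a • f) = ι a * e f) : Module.Projective A Z := by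
  letI i : Module A R := Module.compHom _ ι
  haveI : Module.Projective A R :=
    Module.Projective.of_equiv' ({ e with map_smul' := he } : F ≃ₗ[A] R)
  obtain ⟨s, hs⟩ := Module.projective_lifting_property
    (Finsupp.linearCombination R (id : Z → Z)) LinearMap.id
    (fun x ↦ ⟨Finsupp.single x 1, by simp⟩)
  let s' : Z →ₗ[A] (Z →₀ R) :=
    { toFun := s, map_add' := s.map_add, map_smul' := fun b x => by
        rw [← h, map_smul]; rfl }
  let p' : (Z →₀ R) →ₗ[A] Z :=
    { toFun := Finsupp.linearCombination R (id : Z → Z)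
      map_add' := map_add _
      map_smul' := fun b x => by
        rw [RingHom.id_apply, ← h, ← map_smul]; rfl }
  haveI : Module.Projective A (Z →₀ R) := by
    classical
    exact Module.Projective.of_equiv' (finsuppLequivDFinsupp A (ι := Z) (M := R)).symm
  exact Module.Projective.of_split s' p' (LinearMap.ext fun x => LinearMap.congr_fun hs x)

/-- Projective bimodules are projective on the right. -/
theorem right_projective [Module (B ⊗[k] Bᵐᵒᵖ) X] [Module.Projective (B ⊗[k] Bᵐᵒᵖ) X]
    (h : ∀ (b : Bᵐᵒᵖ) (x : X), ((1 : B) ⊗ₜ[k] b) • x = b • x) :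
    Module.Projective Bᵐᵒᵖ X := by
  refine restr (F := Bᵐᵒᵖ ⊗[k] B)
    (Algebra.TensorProduct.includeRight : Bᵐᵒᵖ →ₐ[k] B ⊗[k] Bᵐᵒᵖ).toRingHom h
    (TensorProduct.comm k Bᵐᵒᵖ B).toAddEquiv ?_
  intro b x
  induction x with
  | zero => simp
  | add x y hx hy => rw [smul_add, map_add, hx, hy, map_add, mul_add]
  | tmul x y => simp [TensorProduct.smul_tmul']

end Tens

section Main

open MulOpposite

variable {k B : Type} [Field k] [Ring B] [Algebra k B]
variable (M : Type) [AddCommGroup M] [Module k M] [Module B M] [IsScalarTower k B M]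
variable (X : ℕ → Type) [∀ i, AddCommGroup (X i)] [∀ i, Module k (X i)] [∀ i, Module B (X i)]
  [∀ i, Module Bᵐᵒᵖ (X i)] [∀ i, IsScalarTower k B (X i)] [∀ i, IsScalarTower k Bᵐᵒᵖ (X i)]
  [∀ i, SMulCommClass B Bᵐᵒᵖ (X i)]

theorem homotopy {A : Type} [Ring A] (Y : ℕ → Type) [∀ i, AddCommGroup (Y i)] [∀ i, Module A (Y i)]
    (d : ∀ i, Y (i + 1) →ₗ[A] Y i) (n : ℕ) (hp : ∀ i ≤ n, Module.Projective A (Y i))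
    (h0 : Function.Surjective (d 0))
    (hex : ∀ i < n, LinearMap.range (d (i + 1)) = LinearMap.ker (d i)) :
    (∃ h : Y 0 →ₗ[A] Y 1, ∀ x, d 0 (h x) = x) ∧
    ∀ i < n, ∃ (h : Y i →ₗ[A] Y (i + 1)) (h' : Y (i + 1) →ₗ[A] Y (i + 2)),
      ∀ x, d (i + 1) (h' x) + h (d i x) = x := by
  have ext1 : ∀ i < n, ∀ h : Y i →ₗ[A] Y (i + 1), (∀ x, d i (h (d i x)) = d i x) →
      ∃ h' : Y (i + 1) →ₗ[A] Y (i + 2), ∀ x, d (i + 1) (h' x) + h (d i x) = x := by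
    intro i hi h hh
    haveI := hp (i + 1) hi
    obtain ⟨h', hh'⟩ := Module.projective_lifting_property (d (i + 1)).rangeRestrict
      (LinearMap.codRestrict (LinearMap.range (d (i + 1))) (LinearMap.id - h ∘ₗ d i)
        (fun x => by rw [hex i hi]; simp [hh])) (LinearMap.surjective_rangeRestrict _)
    refine ⟨h', fun x => ?_⟩
    have := congrArg Subtype.val (LinearMap.congr_fun hh' x)
    have h2 : d (i + 1) (h' x) = x - h (d i x) := this
    rw [h2]; simp
  have dd : ∀ i < n, ∀ x, d i (d (i + 1) x) = 0 := fun i hi x => by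
    have : d (i + 1) x ∈ LinearMap.ker (d i) := by rw [← hex i hi]; exact ⟨x, rfl⟩
    exact this
  have hz : ∃ h : Y 0 →ₗ[A] Y 1, ∀ x, d 0 (h x) = x := by
    haveI := hp 0 (Nat.zero_le _)
    obtain ⟨h, hh⟩ := Module.projective_lifting_property (d 0) LinearMap.id h0
    exact ⟨h, fun x => LinearMap.congr_fun hh x⟩
  have main : ∀ i ≤ n, ∃ h : Y i →ₗ[A] Y (i + 1), ∀ x, d i (h (d i x)) = d i x := by
    intro i
    induction i with
    | zero =>
      intro _
      obtain ⟨h, hh⟩ := hz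
      exact ⟨h, fun x => hh _⟩
    | succ i ih =>
      intro hi
      obtain ⟨h, hh⟩ := ih (by omega)
      obtain ⟨h', hh'⟩ := ext1 i hi h hh
      refine ⟨h', fun x => ?_⟩
      have := hh' (d (i + 1) x)
      rwa [dd i hi, map_zero, add_zero] at this
  refine ⟨hz, fun i hi => ?_⟩
  obtain ⟨h, hh⟩ := main i hi.le
  obtain ⟨h', hh'⟩ := ext1 i hi h hh
  exact ⟨h, h', hh'⟩

theorem S_main [FiniteDimensional k B] [Module.Finite B M] (n : ℕ)
    (d : ∀ i, X (i + 1) →ₗ[B] X i) (hd : ∀ i (b : B) x, d i (op b • x) = op b • d i x)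
    (hp : ∀ i, i ≤ n → Module.Projective Bᵐᵒᵖ (X i))
    (hT : ∀ i, 1 ≤ i → i ≤ n → Module.Projective B (T k B M (X i)))
    (h0 : Function.Surjective (d 0))
    (hex : ∀ i < n, LinearMap.range (d (i + 1)) = LinearMap.ker (d i))
    (e : X 0 ≃+ B) (he : ∀ (a : B) x, e (a • x) = a * e x)
    (he' : ∀ (a : B) x, e (op a • x) = e x * a)
    (u : X (n + 1)) (hu : ∀ x, ∃ b : B, x = op b • u) :
    S k B (kDim k B M) n M := by
  have hkf := kfin k B M
  let r : ∀ i, X (i + 1) →ₗ[Bᵐᵒᵖ] X i := fun i =>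
    { toFun := d i, map_add' := (d i).map_add, map_smul' := fun b x => hd i (unop b) x }
  have hexr : ∀ i < n, LinearMap.range (r (i + 1)) = LinearMap.ker (r i) := fun i hi => by
    ext x
    have := SetLike.ext_iff.1 (hex i hi) x
    exact this
  obtain ⟨⟨hz, hhz⟩, hh⟩ := homotopy X r n hp h0 hexr
  let Q : ℕ → Type := fun i => T k B M (X i)
  let D : ∀ i, Q (i + 1) →ₗ[B] Q i := fun i => Tmap (k := k) (M := M) (d i) (hd i)
  have hD : ∀ i t, D i (Submodule.Quotient.mk t) =
    Submodule.Quotient.mk (((d i).restrictScalars k).rTensor M t) := fun i t => rfl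
  let α : M →ₗ[k] Q (n + 1) :=
    ((rel k B M (X (n + 1))).mkQ.restrictScalars k) ∘ₗ TensorProduct.mk k (X (n + 1)) M u
  have hα : Function.Surjective α := by
    rw [← LinearMap.range_eq_top, eq_top_iff]
    rintro q -
    obtain ⟨t, rfl⟩ := Submodule.Quotient.mk_surjective _ q
    induction t with
    | zero => exact zero_mem _
    | add x y hx hy => exact add_mem hx hy
    | tmul x m =>
      obtain ⟨b, rfl⟩ := hu x
      refine ⟨b • m, ?_⟩
      exact ((Submodule.Quotient.eq _).2 (rel_mem u b m)).symm
  haveI hfk : Module.Finite k (Q (n + 1)) := Module.Finite.of_surjective α hα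
  have hS : S k B (kDim k B M) n (Q 0) := by
    refine S_of_seq _ n Q D hT ?_ ?_ ?_ ?_
    · intro q
      obtain ⟨t, rfl⟩ := Submodule.Quotient.mk_surjective _ q
      refine ⟨Submodule.Quotient.mk ((hz.restrictScalars k).rTensor M t), ?_⟩
      rw [hD, ← LinearMap.comp_apply, ← LinearMap.rTensor_comp]
      have : ((d 0).restrictScalars k) ∘ₗ (hz.restrictScalars k) = LinearMap.id :=
        LinearMap.ext hhz
      rw [this, LinearMap.rTensor_id]; rfl
    · exact Module.Finite.of_restrictScalars_finite k B _
    · rw [kDim_eq k B M, kDim_eq k B (Q (n + 1))]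
      exact LinearMap.finrank_le_finrank_of_surjective hα
    · intro i hi
      obtain ⟨h, h', hhh⟩ := hh i hi
      apply le_antisymm
      · rintro _ ⟨q, rfl⟩
        obtain ⟨t, rfl⟩ := Submodule.Quotient.mk_surjective _ q
        show D i (D (i + 1) _) = 0
        rw [hD, hD, ← LinearMap.comp_apply, ← LinearMap.rTensor_comp]
        have : ((d i).restrictScalars k) ∘ₗ ((d (i + 1)).restrictScalars k) = 0 := by
          ext x
          have : d (i + 1) x ∈ LinearMap.ker (d i) := by rw [← hex i hi]; exact ⟨x, rfl⟩
          exact this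
        rw [this, LinearMap.rTensor_zero]; rfl
      · intro q hq
        obtain ⟨t, rfl⟩ := Submodule.Quotient.mk_surjective _ q
        have h1 : D i (Submodule.Quotient.mk t) = 0 := hq
        rw [hD, Submodule.Quotient.mk_eq_zero] at h1
        have h2 := rel_map (h.restrictScalars k) (fun b x => h.map_smul (op b) x) _ h1
        refine ⟨Submodule.Quotient.mk ((h'.restrictScalars k).rTensor M t), ?_⟩
        rw [hD]
        refine (Submodule.Quotient.eq _).2 ?_
        rw [← LinearMap.comp_apply, ← LinearMap.rTensor_comp] at h2 ⊢
        have h3 : ((d (i + 1)).restrictScalars k) ∘ₗ (h'.restrictScalars k) +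
            (h.restrictScalars k) ∘ₗ ((d i).restrictScalars k) = LinearMap.id :=
          LinearMap.ext hhh
        have h4 : t = (((d (i + 1)).restrictScalars k) ∘ₗ (h'.restrictScalars k) +
            (h.restrictScalars k) ∘ₗ ((d i).restrictScalars k)).rTensor M t := by
          rw [h3, LinearMap.rTensor_id]; rfl
        rw [LinearMap.rTensor_add, LinearMap.add_apply] at h4
        have h5 : ∀ a b c : X (i + 1) ⊗[k] M, t = a + b → b ∈ rel k B M (X (i + 1)) →
            a - t ∈ rel k B M (X (i + 1)) := by
          intro a b _ hab hb
          have : a - t = - b := by rw [hab]; abel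
          rw [this]; exact neg_mem hb
        exact h5 _ _ 0 h4 h2
  let β0 : X 0 →ₗ[B] (M →ₗ[k] M) :=
    { toFun := fun x => Algebra.lsmul k k M (e x)
      map_add' := fun x y => by rw [map_add, map_add]
      map_smul' := fun a x => by
        rw [he, map_mul]; rfl }
  have hβ0 : ∀ x m, β0 x m = e x • m := fun x m => rfl
  let β : Q 0 →ₗ[B] M := Submodule.liftQ _ (TensorProduct.AlgebraTensorModule.lift β0) (by
    refine Submodule.span_le.2 ?_
    rintro _ ⟨x, b, m, rfl⟩
    show _ = _
    rw [map_sub, TensorProduct.AlgebraTensorModule.lift_tmul,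
      TensorProduct.AlgebraTensorModule.lift_tmul, sub_eq_zero, hβ0, hβ0, he', mul_smul])
  have hβ : ∀ x m, β (Submodule.Quotient.mk (x ⊗ₜ m)) = e x • m := fun x m => rfl
  let γ : M →ₗ[k] Q 0 :=
    ((rel k B M (X 0)).mkQ.restrictScalars k) ∘ₗ TensorProduct.mk k (X 0) M (e.symm 1)
  have hγ : ∀ m, γ m = Submodule.Quotient.mk (e.symm 1 ⊗ₜ m) := fun m => rfl
  have hγβ : ∀ q, γ (β q) = q := by
    intro q
    obtain ⟨t, rfl⟩ := Submodule.Quotient.mk_surjective _ q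
    induction t with
    | zero => rw [Submodule.Quotient.mk_zero, map_zero, map_zero]
    | add x y hx hy => rw [Submodule.Quotient.mk_add, map_add, map_add, hx, hy]
    | tmul x m =>
      rw [hβ, hγ]
      have : x = op (e x) • e.symm 1 := by
        apply e.injective
        rw [he']; simp
      conv_rhs => rw [this]
      exact ((Submodule.Quotient.eq _).2 (rel_mem (e.symm 1) (e x) m)).symm
  refine S_congr _ n _ _ (LinearEquiv.ofBijective β ⟨?_, ?_⟩) hS
  · exact Function.LeftInverse.injective hγβ
  · intro m
    exact ⟨γ m, by rw [hγ, hβ]; simp⟩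

theorem S_of_periodic [FiniteDimensional k B] [Module.Finite B M] (n : ℕ) (φ : B ≃ₐ[k] B)
    (h : HasProjExactSeq (B ⊗[k] Bᵐᵒᵖ) (twistedBimodule k B φ) (regularBimodule k B) n) :
    S k B (kDim k B M) n M := by
  obtain ⟨P, d, e, e', hP, h0, -, hex⟩ := h
  letI i1 : ∀ i, Module k (P i) := fun i => Module.compHom _ (algebraMap k (B ⊗[k] Bᵐᵒᵖ))
  letI i2 : ∀ i, Module B (P i) := fun i => Module.compHom _
    (Algebra.TensorProduct.includeLeft : B →ₐ[k] B ⊗[k] Bᵐᵒᵖ).toRingHom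
  letI i3 : ∀ i, Module Bᵐᵒᵖ (P i) := fun i => Module.compHom _
    (Algebra.TensorProduct.includeRight : Bᵐᵒᵖ →ₐ[k] B ⊗[k] Bᵐᵒᵖ).toRingHom
  have a1 : ∀ i (c : k) (x : P i), c • x = (algebraMap k (B ⊗[k] Bᵐᵒᵖ) c) • x :=
    fun i c x => rfl
  have a2 : ∀ i (c : B) (x : P i), c • x = (c ⊗ₜ[k] (1 : Bᵐᵒᵖ)) • x := fun i c x => rfl
  have a3 : ∀ i (c : Bᵐᵒᵖ) (x : P i), c • x = ((1 : B) ⊗ₜ[k] c) • x := fun i c x => rfl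
  haveI : ∀ i, IsScalarTower k B (P i) := fun i => IsScalarTower.of_algebraMap_smul fun r x => by
    rw [a1, a2]; rfl
  haveI : ∀ i, IsScalarTower k Bᵐᵒᵖ (P i) := fun i =>
    IsScalarTower.of_algebraMap_smul fun r x => by
    rw [a1, a3, Algebra.TensorProduct.algebraMap_apply, Algebra.algebraMap_eq_smul_one,
      Algebra.algebraMap_eq_smul_one, TensorProduct.smul_tmul]
  haveI : ∀ i, SMulCommClass B Bᵐᵒᵖ (P i) := fun i => ⟨fun a b x => by
    rw [a2, a3, a2, a3, smul_smul, smul_smul]; simp⟩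
  have a4 : ∀ i (a : B) (b : Bᵐᵒᵖ) (x : P i), (a ⊗ₜ[k] b) • x = a • b • x := fun i a b x => by
    rw [a2, a3, smul_smul]; simp
  have re : ∀ (a : B) (b : Bᵐᵒᵖ) (x : B),
      (((a ⊗ₜ[k] b : B ⊗[k] Bᵐᵒᵖ) • (show regularBimodule k B from x) : regularBimodule k B) : B)
        = a * (x * unop b) := fun a b x => TensorProduct.Algebra.smul_def (M := B) a b x
  have tw : ∀ (a : B) (b : Bᵐᵒᵖ) (x : B),
      (((a ⊗ₜ[k] b : B ⊗[k] Bᵐᵒᵖ) • (show twistedBimodule k B φ from x) : twistedBimodule k B φ) : B)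
        = a * (x * φ (unop b)) :=
    fun a b x => TensorProduct.Algebra.smul_def (M := B) a (op (φ (unop b))) x
  let E : P 0 ≃+ B := e.toAddEquiv
  have hE : ∀ (a : B) x, E (a • x) = a * E x := fun a x => by
    have h1 : e (a • x) = _ := e.map_smul (a ⊗ₜ[k] (1 : Bᵐᵒᵖ)) x
    have h2 := re a 1 (e x)
    have h3 : a * (E x * 1) = a * E x := by rw [mul_one]
    exact h1.trans (h2.trans h3)
  have hE' : ∀ (a : B) x, E (op a • x) = E x * a := fun a x => by
    have h1 : e (op a • x) = _ := e.map_smul ((1 : B) ⊗ₜ[k] op a) x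
    have h2 := re 1 (op a) (e x)
    have h3 : 1 * (E x * a) = E x * a := by rw [one_mul]
    exact h1.trans (h2.trans h3)
  have hp : ∀ i, i ≤ n → Module.Projective Bᵐᵒᵖ (P i) := by
    intro i hi
    rcases Nat.eq_zero_or_pos i with rfl | h1
    · let E2 : Bᵐᵒᵖ ≃ₗ[Bᵐᵒᵖ] P 0 := LinearEquiv.symm
        { E.trans opAddEquiv with
          map_smul' := fun b x => congrArg op (hE' (unop b) x) }
      exact Module.Projective.of_equiv' E2
    · haveI := hP i h1 hi
      exact right_projective (k := k) (B := B) (fun b x => rfl)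
  refine S_main M (fun i => P i) n
    (fun i => { toFun := d i, map_add' := (d i).map_add,
                map_smul' := fun b x => (d i).map_smul (b ⊗ₜ[k] (1 : Bᵐᵒᵖ)) x })
    (fun i b x => (d i).map_smul ((1 : B) ⊗ₜ[k] op b) x) hp ?_ h0 ?_ E hE hE'
    (e' (show twistedBimodule k B φ from (1 : B))) ?_
  · intro i h1 h2
    haveI := hP i h1 h2
    exact T_projective (a4 i)
  · intro i hi
    ext x
    exact SetLike.ext_iff.1 (hex i hi) x
  · intro x
    obtain ⟨y, rfl⟩ := e'.surjective x
    refine ⟨φ.symm y, ?_⟩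
    rw [a3, ← map_smul]
    congr 1
    have := tw 1 (op (φ.symm y)) 1
    have h3 : ∀ z : B, 1 * (1 * φ (φ.symm z)) = z := fun z => by simp
    exact (this.trans (h3 y)).symm

end Main

end TwPer

/-- If a finite-dimensional `k`-algebra `B` is twisted periodic, then every
finitely generated `B`-module has complexity at most one. -/
theorem complexityLeOne_of_isTwistedPeriodicAlgebra (k B : Type) [Field k] [Ring B]
    [Algebra k B] [FiniteDimensional k B] (h : IsTwistedPeriodicAlgebra k B)
    (M : Type) [AddCommGroup M] [Module B M] [Module.Finite B M] :
    ComplexityLeOne k B M := by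

  obtain ⟨n, φ, hn, hseq⟩ := h
  obtain ⟨m, rfl⟩ : ∃ m, n = m + 1 := ⟨n - 1, by omega⟩
  have hS : ∀ (N : Type) [AddCommGroup N] [Module B N] [Module.Finite B N],
      TwPer.S k B (kDim k B N) (m + 1) N := by
    intro N _ _ _
    letI : Module k N := Module.compHom N (algebraMap k B)
    haveI := TwPer.tower k B N
    exact TwPer.S_of_periodic N (m + 1) φ hseq
  obtain ⟨C, hC⟩ := TwPer.finitize (k := k) (B := B) (kDim k B M) m (kDim k B M)
  exact TwPer.build C (kDim k B M) m (fun N _ _ _ hN =>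
    hC N hN (TwPer.S_mono hN (m + 1) N (hS N))) M le_rfl
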